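/- In the abacus category 𝒟 the trapezium equations hold: for all i,j ≥ -1 (not both -1) and all 0 ≤ m ≤ i+1, 0 ≤ n ≤ j+1, one has f^{∘(m+n+1)} ∘ d^m = e^{i+1} ∘ f^{∘(m+n)} as morphisms [i−m, j+m] → [i+n+1, j−n], where d^m : [i−m,j+m] → [i−m,j+m+1] is a horizontal coface map, e^{i+1} : [i+n,j−n] → [i+n+1,j−n] is the top vertical coface map, and f denotes the appropriate abacus maps. -/

import Mathlib

open CategoryTheory

/-- Objects of the abacus category `𝒟`: the object `[i,j]` (for `i,j ≥ -1`, not both `-1`)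
is encoded by `ip = i+1`, `jp = j+1`, i.e. by the numbers of black and white beads; it
corresponds to the map `(d^⊤)^{∘(1+j)} : [i] → [i+1+j]` in the arrow category of `Δ₊`. -/
structure DObj where
  ip : ℕ
  jp : ℕ
  pos : 0 < ip + jp

theorem DObj.ext2 {a b a' b' : ℕ} {h : 0 < a + b} {h' : 0 < a' + b'}
    (ha : a = a') (hb : b = b') : (⟨a, b, h⟩ : DObj) = ⟨a', b', h'⟩ := by
  subst ha; subst hb; rfl

/-- A morphism `[i,j] → [i',j']` of `𝒟` is a commutative square of monotone maps over the
structure maps; equivalently, a monotone map of the target ordinals sending black beads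
(the first `ip` elements, i.e. the image of the structure map) to black beads. -/
@[ext] structure DHom (A B : DObj) where
  toFun : Fin (A.ip + A.jp) → Fin (B.ip + B.jp)
  mono : Monotone toFun
  black : ∀ k : Fin (A.ip + A.jp), (k : ℕ) < A.ip → (toFun k : ℕ) < B.ip

instance : Category DObj where
  Hom := DHom
  id A := ⟨id, monotone_id, fun _ h => h⟩
  comp f g := ⟨g.toFun ∘ f.toFun, g.mono.comp f.mono, fun k hk => g.black _ (f.black k hk)⟩
  id_comp f := by apply DHom.ext; rfl
  comp_id f := by apply DHom.ext; rfl
  assoc f g h := by apply DHom.ext; rfl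

/-- The vertical coface map `e^k : [i,j] → [i+1,j]`, `0 ≤ k ≤ i+1`. -/
def eM (a b : ℕ) (h : 0 < a + b) (k : Fin (a + 1)) :
    (⟨a, b, h⟩ : DObj) ⟶ ⟨a + 1, b, by omega⟩ where
  toFun x := ⟨if (x : ℕ) < (k : ℕ) then (x : ℕ) else (x : ℕ) + 1, by
    have hx : (x : ℕ) < a + b := x.isLt
    show (if (x : ℕ) < (k : ℕ) then (x : ℕ) else (x : ℕ) + 1) < (a + 1) + b
    split_ifs <;> omega⟩
  mono := by
    intro x y hxy
    have hxy' : (x : ℕ) ≤ (y : ℕ) := hxy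
    simp only [Fin.mk_le_mk]
    split_ifs <;> omega
  black := by
    intro x hx
    have hx' : (x : ℕ) < a := hx
    have hk : (k : ℕ) < a + 1 := k.isLt
    show (if (x : ℕ) < (k : ℕ) then (x : ℕ) else (x : ℕ) + 1) < a + 1
    split_ifs <;> omega

/-- The horizontal coface map `d^k : [i,j] → [i,j+1]`, `0 ≤ k ≤ j+1`. -/
def dM (a b : ℕ) (h : 0 < a + b) (k : Fin (b + 1)) :
    (⟨a, b, h⟩ : DObj) ⟶ ⟨a, b + 1, by omega⟩ where
  toFun x := ⟨if (x : ℕ) < a + (k : ℕ) then (x : ℕ) else (x : ℕ) + 1, by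
    have hx : (x : ℕ) < a + b := x.isLt
    show (if (x : ℕ) < a + (k : ℕ) then (x : ℕ) else (x : ℕ) + 1) < a + (b + 1)
    split_ifs <;> omega⟩
  mono := by
    intro x y hxy
    have hxy' : (x : ℕ) ≤ (y : ℕ) := hxy
    simp only [Fin.mk_le_mk]
    split_ifs <;> omega
  black := by
    intro x hx
    have hx' : (x : ℕ) < a := hx
    show (if (x : ℕ) < a + (k : ℕ) then (x : ℕ) else (x : ℕ) + 1) < a
    split_ifs <;> omega

/-- The abacus map `f : [i,j+1] → [i+1,j]`: the identity on underlying ordinals, turning the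
bottom white bead into a black bead. -/
def fM (a b : ℕ) : (⟨a, b + 1, by omega⟩ : DObj) ⟶ ⟨a + 1, b, by omega⟩ where
  toFun x := ⟨(x : ℕ), by
    have hx : (x : ℕ) < a + (b + 1) := x.isLt
    show (x : ℕ) < (a + 1) + b
    omega⟩
  mono := by intro x y hxy; exact hxy
  black := by
    intro x hx
    have hx' : (x : ℕ) < a := hx
    show (x : ℕ) < a + 1
    omega

/-- The vertical codegeneracy map `t^k : [i+1,j] → [i,j]`, `0 ≤ k ≤ i`. -/
def tM (a b : ℕ) (h : 0 < a + b) (k : Fin a) :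
    (⟨a + 1, b, by omega⟩ : DObj) ⟶ ⟨a, b, h⟩ where
  toFun x := ⟨if (x : ℕ) ≤ (k : ℕ) then (x : ℕ) else (x : ℕ) - 1, by
    have hx : (x : ℕ) < (a + 1) + b := x.isLt
    have hk : (k : ℕ) < a := k.isLt
    show (if (x : ℕ) ≤ (k : ℕ) then (x : ℕ) else (x : ℕ) - 1) < a + b
    split_ifs <;> omega⟩
  mono := by
    intro x y hxy
    have hxy' : (x : ℕ) ≤ (y : ℕ) := hxy
    simp only [Fin.mk_le_mk]
    split_ifs <;> omega
  black := by
    intro x hx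
    have hx' : (x : ℕ) < a + 1 := hx
    have hk : (k : ℕ) < a := k.isLt
    show (if (x : ℕ) ≤ (k : ℕ) then (x : ℕ) else (x : ℕ) - 1) < a
    split_ifs <;> omega

/-- The horizontal codegeneracy map `s^k : [i,j+1] → [i,j]`, `0 ≤ k ≤ j`. -/
def sM (a b : ℕ) (h : 0 < a + b) (k : Fin b) :
    (⟨a, b + 1, by omega⟩ : DObj) ⟶ ⟨a, b, h⟩ where
  toFun x := ⟨if (x : ℕ) ≤ a + (k : ℕ) then (x : ℕ) else (x : ℕ) - 1, by
    have hx : (x : ℕ) < a + (b + 1) := x.isLt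
    have hk : (k : ℕ) < b := k.isLt
    show (if (x : ℕ) ≤ a + (k : ℕ) then (x : ℕ) else (x : ℕ) - 1) < a + b
    split_ifs <;> omega⟩
  mono := by
    intro x y hxy
    have hxy' : (x : ℕ) ≤ (y : ℕ) := hxy
    simp only [Fin.mk_le_mk]
    split_ifs <;> omega
  black := by
    intro x hx
    have hx' : (x : ℕ) < a := hx
    show (if (x : ℕ) ≤ a + (k : ℕ) then (x : ℕ) else (x : ℕ) - 1) < a
    split_ifs <;> omega

/-- The `k`-fold composite `f^{∘k} : [i,j] → [i+k, j-k]` of abacus maps. -/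
def fIter (a b : ℕ) (h : 0 < a + b) : (k : ℕ) → k ≤ b →
    ((⟨a, b, h⟩ : DObj) ⟶ ⟨a + k, b - k, by omega⟩)
  | 0, _ => 𝟙 _
  | (k + 1), hk =>
      fIter a b h k (by omega) ≫ eqToHom (DObj.ext2 rfl (by omega)) ≫
        fM (a + k) (b - (k + 1))

theorem toFun_comp {A B C : DObj} (f : A ⟶ B) (g : B ⟶ C) (x : Fin (A.ip + A.jp)) :
    DHom.toFun (f ≫ g) x = DHom.toFun g (DHom.toFun f x) := rfl

theorem toFun_eqToHom {A B : DObj} (h : A = B) (x : Fin (A.ip + A.jp)) :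
    (DHom.toFun (eqToHom h) x : ℕ) = (x : ℕ) := by
  subst h; rfl

theorem toFun_fIter (a b : ℕ) (h : 0 < a + b) (k : ℕ) (hk : k ≤ b) (x : Fin (a + b)) :
    (DHom.toFun (fIter a b h k hk) x : ℕ) = (x : ℕ) := by
  induction k with
  | zero => rfl
  | succ k ih =>
    refine Eq.trans ?_ (ih (by omega))
    rw [fIter, toFun_comp, toFun_comp]
    exact toFun_eqToHom (DObj.ext2 rfl (by omega)) (DHom.toFun (fIter a b h k (by omega)) x)

/-- The trapezium equations in the abacus category `𝒟`: for all `i,j ≥ -1`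
(not both `-1`; here `ip = i+1`, `jp = j+1`, so `0 < ip + jp`) and all `m ≤ i+1 = ip`,
`n ≤ j+1 = jp`, one has `f^{∘(m+n+1)} ∘ d^m = e^{i+1} ∘ f^{∘(m+n)}` as morphisms
`[i-m, j+m] → [i+n+1, j-n]` (the identification of the targets is the `eqToHom` along the
equality of objects). -/
theorem trapezium_equations (ip jp m n : ℕ) (hpos : 0 < ip + jp)
    (hm : m ≤ ip) (hn : n ≤ jp) :
    dM (ip - m) (jp + m) (by omega) ⟨m, by omega⟩ ≫
        fIter (ip - m) ((jp + m) + 1) (by omega) (m + n + 1) (by omega) =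
      (fIter (ip - m) (jp + m) (by omega) (m + n) (by omega) ≫
          eM ((ip - m) + (m + n)) ((jp + m) - (m + n)) (by omega) ⟨ip, by omega⟩) ≫
        eqToHom (DObj.ext2 rfl (by omega)) := by
  apply DHom.ext
  funext x
  apply Fin.ext
  rw [toFun_comp, toFun_comp, toFun_comp, toFun_eqToHom]
  refine (toFun_fIter _ _ _ _ _ _).trans ?_
  have hx := toFun_fIter (ip - m) (jp + m) (by omega) (m + n) (by omega) x
  simp only [dM, eM]
  rw [hx, Nat.sub_add_cancel hm]
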